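/- Let D < −4 be an integer with D ≡ 0 or 1 (mod 4), and let p be an odd prime. Then h(D·p²) = h(D) · (p − (D/p)). -/

import Mathlib

/-- A binary quadratic form `(a, b, c)` evaluated at `(x, y)`. -/
def qfEval (f : ℤ × ℤ × ℤ) (x y : ℤ) : ℤ :=
  f.1 * x ^ 2 + f.2.1 * x * y + f.2.2 * y ^ 2

/-- The discriminant `b² - 4ac` of the form `(a, b, c)`. -/
def qfDisc (f : ℤ × ℤ × ℤ) : ℤ := f.2.1 ^ 2 - 4 * f.1 * f.2.2

/-- The form `(a, b, c)` is primitive if `gcd(a, b, c) = 1`. -/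
def IsPrimitiveQF (f : ℤ × ℤ × ℤ) : Prop :=
  Int.gcd (Int.gcd f.1 f.2.1) f.2.2 = 1

/-- `f` is derived from `g` via the matrix `A`, i.e. `f(x,y) = g(A·(x,y)ᵀ)`. -/
def DerivedVia (f g : ℤ × ℤ × ℤ) (A : Matrix (Fin 2) (Fin 2) ℤ) : Prop :=
  ∀ x y : ℤ, qfEval f x y = qfEval g (A 0 0 * x + A 0 1 * y) (A 1 0 * x + A 1 1 * y)

/-- Two forms are equivalent if one is derived from the other via a determinant-1
integer matrix. -/
def QFEquiv (f g : ℤ × ℤ × ℤ) : Prop :=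
  ∃ A : Matrix (Fin 2) (Fin 2) ℤ, A.det = 1 ∧ DerivedVia f g A

/-- The class number `h(D)`: the number of equivalence classes of primitive binary
quadratic forms of discriminant `D` with positive leading coefficient. -/
noncomputable def classNumber (D : ℤ) : ℕ :=
  Nat.card (Quot fun f g : {f : ℤ × ℤ × ℤ // qfDisc f = D ∧ IsPrimitiveQF f ∧ 0 < f.1} =>
    QFEquiv f.1 g.1)

/-- The form `g` transformed by the matrix `[[α, β], [γ, δ]]`. -/
def qfSub (g : ℤ × ℤ × ℤ) (α β γ δ : ℤ) : ℤ × ℤ × ℤ :=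
  (g.1 * α ^ 2 + g.2.1 * α * γ + g.2.2 * γ ^ 2,
   2 * g.1 * α * β + g.2.1 * (α * δ + β * γ) + 2 * g.2.2 * γ * δ,
   g.1 * β ^ 2 + g.2.1 * β * δ + g.2.2 * δ ^ 2)

theorem qfEquiv_iff (f g : ℤ × ℤ × ℤ) :
    QFEquiv f g ↔ ∃ α β γ δ : ℤ, α * δ - β * γ = 1 ∧ f = qfSub g α β γ δ := by
  constructor
  · rintro ⟨A, hA, h⟩
    refine ⟨A 0 0, A 0 1, A 1 0, A 1 1, ?_, ?_⟩
    · rw [Matrix.det_fin_two] at hA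
      exact hA
    · have h1 := h 1 0
      have h2 := h 0 1
      have h3 := h 1 1
      obtain ⟨a, b, c⟩ := f
      simp only [qfEval] at h1 h2 h3
      simp only [qfSub, Prod.mk.injEq]
      refine ⟨?_, ?_, ?_⟩ <;> linarith
  · rintro ⟨α, β, γ, δ, hd, rfl⟩
    refine ⟨!![α, β; γ, δ], ?_, ?_⟩
    · rw [Matrix.det_fin_two]
      simpa using hd
    · intro x y
      simp [qfEval, qfSub]
      ring

theorem qfSub_qfSub (g : ℤ × ℤ × ℤ) (α β γ δ α' β' γ' δ' : ℤ) :
    qfSub (qfSub g α β γ δ) α' β' γ' δ' =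
      qfSub g (α * α' + β * γ') (α * β' + β * δ') (γ * α' + δ * γ') (γ * β' + δ * δ') := by
  simp only [qfSub, Prod.mk.injEq]
  refine ⟨?_, ?_, ?_⟩ <;> ring

theorem qfSub_one (g : ℤ × ℤ × ℤ) : qfSub g 1 0 0 1 = g := by
  obtain ⟨a, b, c⟩ := g
  simp [qfSub]

theorem qfSub_inv (g f : ℤ × ℤ × ℤ) (α β γ δ : ℤ) (hd : α * δ - β * γ = 1)
    (h : f = qfSub g α β γ δ) : g = qfSub f δ (-β) (-γ) α := by
  rw [h, qfSub_qfSub]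
  have e1 : α * δ + β * -γ = 1 := by linarith
  have e2 : α * -β + β * α = 0 := by ring
  have e3 : γ * δ + δ * -γ = 0 := by ring
  have e4 : γ * -β + δ * α = 1 := by linarith
  rw [e1, e2, e3, e4, qfSub_one]

theorem qfEquiv_refl (f : ℤ × ℤ × ℤ) : QFEquiv f f :=
  (qfEquiv_iff f f).2 ⟨1, 0, 0, 1, by norm_num, (qfSub_one f).symm⟩

theorem qfEquiv_symm {f g : ℤ × ℤ × ℤ} (h : QFEquiv f g) : QFEquiv g f := by
  obtain ⟨α, β, γ, δ, hd, h⟩ := (qfEquiv_iff f g).1 h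
  exact (qfEquiv_iff g f).2 ⟨δ, -β, -γ, α, by linarith, qfSub_inv g f α β γ δ hd h⟩

theorem qfEquiv_trans {f g k : ℤ × ℤ × ℤ} (h : QFEquiv f g) (h' : QFEquiv g k) :
    QFEquiv f k := by
  obtain ⟨α, β, γ, δ, hd, rfl⟩ := (qfEquiv_iff f g).1 h
  obtain ⟨α', β', γ', δ', hk, rfl⟩ := (qfEquiv_iff g k).1 h'
  refine (qfEquiv_iff _ k).2 ⟨_, _, _, _, ?_, qfSub_qfSub k α' β' γ' δ' α β γ δ⟩
  linear_combination (α * δ - β * γ) * hk + hd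

/-- The forms counted by the class number. -/
abbrev QF (D : ℤ) := {f : ℤ × ℤ × ℤ // qfDisc f = D ∧ IsPrimitiveQF f ∧ 0 < f.1}

/-- The classes of forms. -/
abbrev QFCl (D : ℤ) := Quot fun f g : QF D => QFEquiv f.1 g.1

theorem qfCl_eq {D : ℤ} (f g : QF D) :
    (Quot.mk _ f : QFCl D) = Quot.mk _ g ↔ QFEquiv f.1 g.1 := by
  rw [Quot.eq, Equivalence.eqvGen_iff]
  exact ⟨fun f => qfEquiv_refl f.1, fun h => qfEquiv_symm h, fun h h' => qfEquiv_trans h h'⟩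

theorem prim_iff (f : ℤ × ℤ × ℤ) :
    IsPrimitiveQF f ↔ ∀ q : ℕ, q.Prime → (q : ℤ) ∣ f.1 → (q : ℤ) ∣ f.2.1 → (q : ℤ) ∣ f.2.2 →
      False := by
  unfold IsPrimitiveQF
  constructor
  · intro h q hq h1 h2 h3
    have : (q : ℤ) ∣ ((Int.gcd (Int.gcd f.1 f.2.1) f.2.2 : ℕ) : ℤ) :=
      Int.dvd_coe_gcd (Int.dvd_coe_gcd h1 h2) h3
    rw [h] at this
    have := Int.natCast_dvd_natCast.1 this
    exact hq.one_lt.ne' (Nat.dvd_one.1 this)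
  · intro h
    by_contra hne
    obtain ⟨q, hq, hd⟩ := Nat.exists_prime_and_dvd hne
    have hd' : (q : ℤ) ∣ ((Int.gcd (Int.gcd f.1 f.2.1) f.2.2 : ℕ) : ℤ) :=
      Int.natCast_dvd_natCast.2 hd
    have h12 := hd'.trans (Int.gcd_dvd_left _ _)
    exact h q hq (h12.trans (Int.gcd_dvd_left _ _)) (h12.trans (Int.gcd_dvd_right _ _))
      (hd'.trans (Int.gcd_dvd_right _ _))

theorem disc_qfSub (g : ℤ × ℤ × ℤ) (α β γ δ : ℤ) :
    qfDisc (qfSub g α β γ δ) = qfDisc g * (α * δ - β * γ) ^ 2 := by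
  simp only [qfDisc, qfSub]
  ring

theorem prim_qfSub (g : ℤ × ℤ × ℤ) (α β γ δ : ℤ) (hd : α * δ - β * γ = 1)
    (h : IsPrimitiveQF g) : IsPrimitiveQF (qfSub g α β γ δ) := by
  rw [prim_iff] at h ⊢
  intro q hq h1 h2 h3
  have e := qfSub_inv g _ α β γ δ hd rfl
  generalize qfSub g α β γ δ = k at *
  subst e
  apply h q hq
  · exact dvd_add (dvd_add (h1.mul_right _) ((h2.mul_right _).mul_right _)) (h3.mul_right _)
  · exact dvd_add (dvd_add (((h1.mul_left _).mul_right _).mul_right _) (h2.mul_right _))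
      (((h3.mul_left _).mul_right _).mul_right _)
  · exact dvd_add (dvd_add (h1.mul_right _) ((h2.mul_right _).mul_right _)) (h3.mul_right _)

theorem pos_value (g : ℤ × ℤ × ℤ) (hD : qfDisc g < 0) (hg : 0 < g.1) (x y : ℤ)
    (hxy : x ≠ 0 ∨ y ≠ 0) : 0 < g.1 * x ^ 2 + g.2.1 * x * y + g.2.2 * y ^ 2 := by
  obtain ⟨a, b, c⟩ := g
  simp only [qfDisc] at *
  have key : 4 * a * (a * x ^ 2 + b * x * y + c * y ^ 2)
      = (2 * a * x + b * y) ^ 2 + (-(b ^ 2 - 4 * a * c)) * y ^ 2 := by ring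
  have : 0 < 4 * a * (a * x ^ 2 + b * x * y + c * y ^ 2) := by
    rw [key]
    by_cases hy : y = 0
    · have hx : x ≠ 0 := by tauto
      subst hy
      have : 2 * a * x ≠ 0 := by positivity
      have := sq_pos_of_ne_zero this
      simpa using this
    · have : 0 < y ^ 2 := by positivity
      have : 0 < (-(b ^ 2 - 4 * a * c)) * y ^ 2 := mul_pos (by linarith) this
      nlinarith [sq_nonneg (2 * a * x + b * y)]
  exact (pos_iff_pos_of_mul_pos this).1 (by linarith)

theorem stab_trivial (g : ℤ × ℤ × ℤ) (hD : qfDisc g < -4) (hg : 0 < g.1) (hp : IsPrimitiveQF g)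
    (α β γ δ : ℤ) (hd : α * δ - β * γ = 1) (h : g = qfSub g α β γ δ) :
    α ^ 2 = 1 ∧ β = 0 ∧ γ = 0 ∧ δ = α := by
  obtain ⟨a, b, c⟩ := g
  simp only [qfDisc, qfSub, Prod.mk.injEq, IsPrimitiveQF] at *
  obtain ⟨h1, h2, h3⟩ := h
  have k1 : a * (δ - α) = b * γ := by
    have : 2 * (a * (δ - α) - b * γ) = 0 := by
      linear_combination 2 * δ * h1 - γ * h2 + (2 * a * α + b * γ) * hd
    linarith
  have k2 : a * β = -(c * γ) := by
    have : 2 * (a * β + c * γ) = 0 := by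
      linear_combination (-δ) * h2 + 2 * γ * h3 - (2 * a * β + b * δ) * hd
    linarith
  have hbez : ∃ x y z : ℤ, a * x + b * y + c * z = 1 := by
    have e1 := Int.gcd_eq_gcd_ab a b
    have e2 := Int.gcd_eq_gcd_ab (Int.gcd a b) c
    rw [hp, e1] at e2
    push_cast at e2
    exact ⟨a.gcdA b * (a * a.gcdA b + b * a.gcdB b).gcdA c,
      a.gcdB b * (a * a.gcdA b + b * a.gcdB b).gcdA c,
      (a * a.gcdA b + b * a.gcdB b).gcdB c, by linear_combination -e2⟩
  obtain ⟨x, y, z, hxyz⟩ := hbez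
  obtain ⟨u, hu⟩ : a ∣ γ := by
    refine ⟨γ * x + (δ - α) * y - β * z, ?_⟩
    linear_combination (-γ) * hxyz - y * k1 + z * k2
  subst hu
  have ha : a ≠ 0 := hg.ne'
  have l1 : δ = α + b * u := by
    apply mul_left_cancel₀ ha
    linear_combination k1
  have l2 : β = -(c * u) := by
    apply mul_left_cancel₀ ha
    linear_combination k2
  subst l1 l2
  have key : (2 * α + b * u) ^ 2 + (-(b ^ 2 - 4 * a * c)) * u ^ 2 = 4 := by
    linear_combination 4 * hd
  have hu : u = 0 := by
    by_contra hu
    have : 1 ≤ u ^ 2 := by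
      have : 0 < u ^ 2 := by positivity
      linarith
    nlinarith [sq_nonneg (2 * α + b * u)]
  subst hu
  refine ⟨?_, by ring, by ring, by ring⟩
  linear_combination hd

theorem count_roots (p : ℕ) [Fact p.Prime] (hp2 : p ≠ 2) (a b c : ZMod p)
    (h : ¬ (a = 0 ∧ b = 0 ∧ c = 0)) :
    (Nat.card {i : Option (ZMod p) //
      i.elim a (fun j => a * j ^ 2 + b * j + c) ≠ 0} : ℤ) =
      p - quadraticChar (ZMod p) (b ^ 2 - 4 * a * c) := by
  classical
  have h2 : (2 : ZMod p) ≠ 0 := by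
    have := ZMod.ringChar_zmod_n p
    exact Ring.two_ne_zero (by rw [this]; exact hp2)
  have hchar : ringChar (ZMod p) ≠ 2 := by rw [ZMod.ringChar_zmod_n]; exact hp2
  have hN : Nat.card {i : Option (ZMod p) // i.elim a (fun j => a * j ^ 2 + b * j + c) ≠ 0} =
      (if a = 0 then 0 else 1) +
        (Finset.univ.filter (fun j : ZMod p => ¬ (a * j ^ 2 + b * j + c = 0))).card := by
    rw [Nat.card_eq_fintype_card, Fintype.card_subtype, Finset.card_filter, Fintype.sum_option,
      ← Finset.card_filter]
    congr 1
    by_cases ha : a = 0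
    · rw [if_pos ha]
      exact if_neg (not_not.2 ha)
    · rw [if_neg ha]
      exact if_pos ha
  rw [hN]
  have htot := Finset.card_filter_add_card_filter_not (s := (Finset.univ : Finset (ZMod p)))
    (fun j => a * j ^ 2 + b * j + c = 0)
  rw [Finset.card_univ, ZMod.card] at htot
  have hroot : ((Finset.univ.filter (fun j : ZMod p => a * j ^ 2 + b * j + c = 0)).card : ℤ)
      + (if a = 0 then 1 else 0) = 1 + quadraticChar (ZMod p) (b ^ 2 - 4 * a * c) := by
    by_cases ha : a = 0
    · subst ha
      by_cases hb : b = 0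
      · subst hb
        have hc : c ≠ 0 := by tauto
        simp [hc]
      · have : (Finset.univ.filter (fun j : ZMod p => 0 * j ^ 2 + b * j + c = 0)) = {-c / b} := by
          ext j
          simp only [Finset.mem_filter, Finset.mem_univ, true_and, Finset.mem_singleton]
          rw [eq_div_iff hb]
          constructor
          · intro h
            linear_combination h
          · intro h
            linear_combination h
        rw [this]
        have e : b ^ 2 - 4 * 0 * c = b ^ 2 := by ring
        rw [e, quadraticChar_sq_one' hb]
        simp
    · rw [if_neg ha, add_zero]
      have := quadraticChar_card_sqrts hchar (b ^ 2 - 4 * a * c)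
      rw [add_comm, ← this]
      norm_cast
      have h2a : 2 * a ≠ 0 := mul_ne_zero h2 ha
      apply Finset.card_bij (fun j _ => 2 * a * j + b)
      · intro j hj
        simp only [Finset.mem_filter, Finset.mem_univ, true_and] at hj
        simp only [Set.mem_toFinset, Set.mem_ofPred_eq]
        linear_combination 4 * a * hj
      · intro j _ k _ hjk
        exact mul_left_cancel₀ h2a (by linear_combination hjk)
      · intro x hx
        simp only [Set.mem_toFinset, Set.mem_ofPred_eq] at hx
        refine ⟨(x - b) / (2 * a), ?_, ?_⟩
        · simp only [Finset.mem_filter, Finset.mem_univ, true_and]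
          have h4a : 2 * 2 * a ≠ 0 := mul_ne_zero (mul_ne_zero h2 h2) ha
          apply mul_left_cancel₀ h4a
          field_simp
          linear_combination hx
        · field_simp
          ring
  have htot' : ((Finset.univ.filter (fun j : ZMod p => a * j ^ 2 + b * j + c = 0)).card : ℤ)
    + (Finset.univ.filter (fun j : ZMod p => ¬ (a * j ^ 2 + b * j + c = 0))).card = p := by
    exact_mod_cast htot
  by_cases ha : a = 0
  · rw [if_pos ha] at hroot
    rw [if_pos ha]
    push_cast
    linarith
  · rw [if_neg ha] at hroot
    rw [if_neg ha]
    push_cast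
    linarith

/-- Restriction of a form to the sublattice spanned by `e₁, p e₂`. -/
def qfDiag (p : ℤ) (f : ℤ × ℤ × ℤ) : ℤ × ℤ × ℤ := (f.1, p * f.2.1, p ^ 2 * f.2.2)

theorem disc_qfDiag (p : ℤ) (f : ℤ × ℤ × ℤ) : qfDisc (qfDiag p f) = qfDisc f * p ^ 2 := by
  simp only [qfDisc, qfDiag]
  ring

theorem prim_qfDiag (p : ℕ) (hp : p.Prime) (f : ℤ × ℤ × ℤ) (hf : IsPrimitiveQF f)
    (ha : ¬ (p : ℤ) ∣ f.1) : IsPrimitiveQF (qfDiag p f) := by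
  rw [prim_iff] at hf ⊢
  intro q hq h1 h2 h3
  simp only [qfDiag] at h1 h2 h3
  have hqp : ¬ (q : ℤ) ∣ (p : ℤ) := by
    intro h
    have := (Nat.prime_dvd_prime_iff_eq hq hp).1 (Int.natCast_dvd_natCast.1 h)
    subst this
    exact ha h1
  have hq' : Prime (q : ℤ) := Nat.prime_iff_prime_int.1 hq
  exact hf q hq h1 ((hq'.dvd_or_dvd h2).resolve_left hqp)
    ((hq'.dvd_or_dvd h3).resolve_left (fun h => hqp (hq'.dvd_of_dvd_pow h)))

theorem qf_mem {D : ℤ} (hD : D < 0) (f : ℤ × ℤ × ℤ)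
    (hf : qfDisc f = D ∧ IsPrimitiveQF f ∧ 0 < f.1) (α β γ δ : ℤ) (hd : α * δ - β * γ = 1) :
    qfDisc (qfSub f α β γ δ) = D ∧ IsPrimitiveQF (qfSub f α β γ δ) ∧
      0 < (qfSub f α β γ δ).1 := by
  refine ⟨?_, prim_qfSub f α β γ δ hd hf.2.1, ?_⟩
  · rw [disc_qfSub, hd, hf.1]
    ring
  · refine pos_value f (by rw [hf.1]; exact hD) hf.2.2 α γ ?_
    by_contra h
    push Not at h
    rw [h.1, h.2] at hd
    norm_num at hd

theorem qf_descend_aux {D : ℤ} (p : ℕ) (hp : p.Prime) (hodd : Odd p)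
    (k : ℤ × ℤ × ℤ) (hk : qfDisc k = D * (p : ℤ) ^ 2 ∧ IsPrimitiveQF k ∧ 0 < k.1)
    (ha : ¬ (p : ℤ) ∣ k.1) (hb : (p : ℤ) ∣ k.2.1) :
    ∃ f : ℤ × ℤ × ℤ, (qfDisc f = D ∧ IsPrimitiveQF f ∧ 0 < f.1) ∧
      ¬ (p : ℤ) ∣ f.1 ∧ qfDiag p f = k := by
  obtain ⟨a, b, c⟩ := k
  obtain ⟨h1, h2, h3⟩ := hk
  simp only at *
  obtain ⟨b', rfl⟩ := hb
  have hpi : Prime (p : ℤ) := Nat.prime_iff_prime_int.1 hp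
  have hp2 : ¬ (p : ℤ) ∣ 4 := by
    intro h
    have h' : p ∣ 2 ^ 2 := by exact_mod_cast h
    have := (Nat.prime_dvd_prime_iff_eq hp Nat.prime_two).1 (hp.dvd_of_dvd_pow h')
    subst this
    exact absurd hodd (by decide)
  have hc : (p : ℤ) ^ 2 ∣ c := by
    have hcop : IsCoprime ((p : ℤ) ^ 2) (4 * a) := by
      apply IsCoprime.pow_left
      rw [hpi.coprime_iff_not_dvd]
      intro h
      exact (hpi.dvd_or_dvd h).elim hp2 ha
    refine hcop.dvd_of_dvd_mul_left ⟨b' ^ 2 - D, ?_⟩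
    simp only [qfDisc] at h1
    linear_combination -h1
  obtain ⟨c', rfl⟩ := hc
  have hp0 : (p : ℤ) ^ 2 ≠ 0 := pow_ne_zero _ hpi.ne_zero
  refine ⟨(a, b', c'), ⟨?_, ?_, h3⟩, ha, rfl⟩
  · apply mul_right_cancel₀ hp0
    rw [← h1, ← disc_qfDiag]
    rfl
  · rw [prim_iff] at h2 ⊢
    intro q hq k1 k2 k3
    exact h2 q hq k1 (k2.mul_left _) (k3.mul_left _)

theorem qf_descend {D : ℤ} (hD : D < 0) (p : ℕ) (hp : p.Prime) (hodd : Odd p)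
    (g : ℤ × ℤ × ℤ) (hg : qfDisc g = D * (p : ℤ) ^ 2 ∧ IsPrimitiveQF g ∧ 0 < g.1) :
    ∃ f : ℤ × ℤ × ℤ, (qfDisc f = D ∧ IsPrimitiveQF f ∧ 0 < f.1) ∧
      ¬ (p : ℤ) ∣ f.1 ∧ QFEquiv (qfDiag p f) g := by
  have hpi : Prime (p : ℤ) := Nat.prime_iff_prime_int.1 hp
  have hD' : D * (p : ℤ) ^ 2 < 0 := by
    have : 0 < (p : ℤ) ^ 2 := by
      have := hp.pos
      positivity
    exact mul_neg_of_neg_of_pos hD this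
  suffices h : ∃ α β γ δ : ℤ, α * δ - β * γ = 1 ∧ ¬ (p : ℤ) ∣ (qfSub g α β γ δ).1 ∧
      (p : ℤ) ∣ (qfSub g α β γ δ).2.1 by
    obtain ⟨α, β, γ, δ, hd, h1, h2⟩ := h
    obtain ⟨f, hf, hf1, hf2⟩ := qf_descend_aux p hp hodd _ (qf_mem hD' g hg α β γ δ hd) h1 h2
    exact ⟨f, hf, hf1, (qfEquiv_iff _ _).2 ⟨α, β, γ, δ, hd, hf2⟩⟩
  have hdisc := hg.1
  simp only [qfDisc] at hdisc
  by_cases ha : (p : ℤ) ∣ g.1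
  · have hb : (p : ℤ) ∣ g.2.1 := by
      apply hpi.dvd_of_dvd_pow (n := 2)
      have : g.2.1 ^ 2 = g.1 * (4 * g.2.2) + p * (D * p) := by linear_combination hdisc
      rw [this]
      exact dvd_add (ha.mul_right _) (dvd_mul_right _ _)
    refine ⟨0, -1, 1, 0, by norm_num, ?_, ?_⟩
    · intro h
      simp only [qfSub] at h
      exact (prim_iff g).1 hg.2.1 p hp ha hb (by simpa using h)
    · simpa [qfSub] using hb
  · have hcop : IsCoprime (p : ℤ) (2 * g.1) := by
      rw [hpi.coprime_iff_not_dvd]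
      intro h
      rcases hpi.dvd_or_dvd h with h | h
      · have h' : p ∣ 2 := by exact_mod_cast h
        have := (Nat.prime_dvd_prime_iff_eq hp Nat.prime_two).1 h'
        subst this
        exact absurd hodd (by decide)
      · exact ha h
    obtain ⟨u, v, huv⟩ := hcop
    refine ⟨1, -(v * g.2.1), 0, 1, by ring, ?_, ?_⟩
    · simpa [qfSub] using ha
    · refine ⟨u * g.2.1, ?_⟩
      simp only [qfSub]
      linear_combination (-g.2.1) * huv

theorem qf_lift_equiv (p : ℕ) (hp : p.Prime) (hodd : Odd p) (F G : ℤ × ℤ × ℤ)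
    (hF : ¬ (p : ℤ) ∣ F.1) (hG : ¬ (p : ℤ) ∣ G.1) (h : QFEquiv (qfDiag p F) (qfDiag p G)) :
    ∃ α β γ δ : ℤ, α * δ - β * (p * γ) = 1 ∧ F = qfSub G α β (p * γ) δ := by
  obtain ⟨α, β, γ, δ, hd, h⟩ := (qfEquiv_iff _ _).1 h
  obtain ⟨a, b, c⟩ := F
  obtain ⟨a', b', c'⟩ := G
  simp only [qfDiag, qfSub, Prod.mk.injEq] at *
  obtain ⟨h1, h2, h3⟩ := h
  have hpi : Prime (p : ℤ) := Nat.prime_iff_prime_int.1 hp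
  have hα : ¬ (p : ℤ) ∣ α := by
    rintro ⟨k, rfl⟩
    exact hF ⟨a' * p * k ^ 2 + p * b' * k * γ + p * c' * γ ^ 2, by linear_combination h1⟩
  have hβ : (p : ℤ) ∣ β := by
    have : (p : ℤ) ∣ 2 * a' * α * β :=
      ⟨b - b' * (α * δ + β * γ) - 2 * p * c' * γ * δ, by linear_combination -h2⟩
    rcases hpi.dvd_or_dvd this with h | h
    · rcases hpi.dvd_or_dvd h with h | h
      · rcases hpi.dvd_or_dvd h with h | h
        · have h' : p ∣ 2 := by exact_mod_cast h
          have := (Nat.prime_dvd_prime_iff_eq hp Nat.prime_two).1 h'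
          subst this
          exact absurd hodd (by decide)
        · exact absurd h hG
      · exact absurd h hα
    · exact h
  obtain ⟨β, rfl⟩ := hβ
  have hp0 : (p : ℤ) ≠ 0 := hpi.ne_zero
  refine ⟨α, β, γ, δ, by linear_combination hd, ?_, ?_, ?_⟩
  · linear_combination h1
  · apply mul_left_cancel₀ hp0
    linear_combination h2
  · apply mul_left_cancel₀ (pow_ne_zero 2 hp0)
    linear_combination h3

theorem qf_equiv_lift (p : ℤ) (G : ℤ × ℤ × ℤ) (α β γ δ : ℤ)
    (hd : α * δ - β * (p * γ) = 1) :
    QFEquiv (qfDiag p (qfSub G α β (p * γ) δ)) (qfDiag p G) := by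
  refine (qfEquiv_iff _ _).2 ⟨α, p * β, γ, δ, by linear_combination hd, ?_⟩
  simp only [qfDiag, qfSub, Prod.mk.injEq]
  refine ⟨?_, ?_, ?_⟩ <;> ring

/-- Entries of the matrix attached to a point of the projective line over `ZMod p`. -/
def pα {p : ℕ} (i : Option (ZMod p)) : ℤ := i.elim 1 (fun j => (j.val : ℤ))
/-- Upper right entry. -/
def pβ {p : ℕ} (i : Option (ZMod p)) : ℤ := i.elim 0 (fun _ => -1)
/-- Lower left entry. -/
def pγ {p : ℕ} (i : Option (ZMod p)) : ℤ := i.elim 0 (fun _ => 1)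
/-- Lower right entry. -/
def pδ {p : ℕ} (i : Option (ZMod p)) : ℤ := i.elim 1 (fun _ => 0)

theorem p_det {p : ℕ} (i : Option (ZMod p)) : pα i * pδ i - pβ i * pγ i = 1 := by
  cases i <;> simp [pα, pβ, pγ, pδ]

/-- The form `f` in the basis attached to the point `i`. -/
def qfAt {p : ℕ} (f : ℤ × ℤ × ℤ) (i : Option (ZMod p)) : ℤ × ℤ × ℤ :=
  qfSub f (pα i) (pβ i) (pγ i) (pδ i)

/-- Nonvanishing of `f` at the point `i`. -/
def NonVan (p : ℕ) (f : ℤ × ℤ × ℤ) (i : Option (ZMod p)) : Prop :=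
  i.elim (f.1 : ZMod p) (fun j => (f.1 : ZMod p) * j ^ 2 + (f.2.1 : ZMod p) * j + (f.2.2 : ZMod p))
    ≠ 0

theorem nonVan_iff (p : ℕ) [Fact p.Prime] (f : ℤ × ℤ × ℤ) (i : Option (ZMod p)) :
    NonVan p f i ↔ ¬ (p : ℤ) ∣ (qfAt f i).1 := by
  unfold NonVan
  rw [← ZMod.intCast_zmod_eq_zero_iff_dvd]
  cases i with
  | none => simp [qfAt, qfSub, pα, pγ]
  | some j => simp [qfAt, qfSub, pα, pγ]

theorem p_inj {p : ℕ} [Fact p.Prime] (i j : Option (ZMod p))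
    (h : (p : ℤ) ∣ pα i * pγ j - pγ i * pα j) : i = j := by
  rw [← ZMod.intCast_zmod_eq_zero_iff_dvd] at h
  cases i <;> cases j <;> simp [pα, pγ] at h ⊢
  exact sub_eq_zero.1 h

theorem p_exists {p : ℕ} [Fact p.Prime] (α γ : ℤ) :
    ∃ i : Option (ZMod p), (p : ℤ) ∣ pα i * γ - pγ i * α := by
  by_cases hγ : (γ : ZMod p) = 0
  · refine ⟨none, ?_⟩
    rw [← ZMod.intCast_zmod_eq_zero_iff_dvd]
    simp [pα, pγ, hγ]
  · refine ⟨some (α / γ), ?_⟩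
    rw [← ZMod.intCast_zmod_eq_zero_iff_dvd]
    simp [pα, pγ, hγ]

theorem card_nonVan (p : ℕ) [Fact p.Prime] (hodd : Odd p) (f : ℤ × ℤ × ℤ)
    (hf : IsPrimitiveQF f) :
    (Nat.card {i : Option (ZMod p) // NonVan p f i} : ℤ) = p - legendreSym p (qfDisc f) := by
  have hp2 : p ≠ 2 := by
    rintro rfl
    exact absurd hodd (by decide)
  have := count_roots p hp2 (f.1 : ZMod p) (f.2.1 : ZMod p) (f.2.2 : ZMod p) (by
    rintro ⟨h1, h2, h3⟩
    rw [ZMod.intCast_zmod_eq_zero_iff_dvd] at h1 h2 h3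
    exact (prim_iff f).1 hf p Fact.out h1 h2 h3)
  unfold NonVan legendreSym
  rw [this]
  simp [qfDisc]

theorem qf_inj {D : ℤ} (hD : D < -4) (p : ℕ) [hpf : Fact p.Prime] (hodd : Odd p) (f f' : QF D)
    (i j : Option (ZMod p)) (hi : NonVan p f.1 i) (hj : NonVan p f'.1 j)
    (h : QFEquiv (qfDiag p (qfAt f.1 i)) (qfDiag p (qfAt f'.1 j))) :
    QFEquiv f.1 f'.1 ∧ (f = f' → i = j) := by
  rw [nonVan_iff] at hi hj
  obtain ⟨α, β, γ, δ, hd, h⟩ := qf_lift_equiv p hpf.out hodd _ _ hi hj h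
  have hdi := p_det i
  have hdj := p_det j
  have e := qfSub_inv f.1 _ _ _ _ _ hdi rfl
  rw [← qfAt, h, qfAt, qfSub_qfSub, qfSub_qfSub] at e
  constructor
  · refine (qfEquiv_iff _ _).2 ⟨_, _, _, _, ?_, e⟩
    linear_combination (pα i * pδ i - pβ i * pγ i) * (α * δ - β * (p * γ)) * hdj +
      (pα i * pδ i - pβ i * pγ i) * hd + hdi
  · rintro rfl
    have hs := stab_trivial f.1 (by rw [f.2.1]; exact hD) f.2.2.2 f.2.2.1 _ _ _ _ (by
      linear_combination (pα i * pδ i - pβ i * pγ i) * (α * δ - β * (p * γ)) * hdj +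
        (pα i * pδ i - pβ i * pγ i) * hd + hdi) e
    obtain ⟨s1, s2, s3, s4⟩ := hs
    apply p_inj
    set n1 := pα j * α + pβ j * (p * γ) with hn1
    set n2 := pα j * β + pβ j * δ with hn2
    set n3 := pγ j * α + pδ j * (p * γ) with hn3
    set n4 := pγ j * β + pδ j * δ with hn4
    set ε := n1 * pδ i + n2 * -pγ i with hε
    have t1 : n1 = ε * pα i := by
      linear_combination (-n1) * hdi + pγ i * s2 - pα i * hε
    have t3 : n3 = ε * pγ i := by
      linear_combination (-n3) * hdi + pα i * s3 + pγ i * s4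
    refine ⟨ε * γ * (pβ j * pγ j - pδ j * pα j), ?_⟩
    linear_combination (-(pα i * pγ j - pγ i * pα j)) * s1 - ε * pγ j * t1 + ε * pα j * t3
      + ε * pγ j * hn1 - ε * pα j * hn3

theorem qf_surj {D : ℤ} (hD : D < 0) (p : ℕ) [hpf : Fact p.Prime] (hodd : Odd p)
    (g : ℤ × ℤ × ℤ) (hg : qfDisc g = D * (p : ℤ) ^ 2 ∧ IsPrimitiveQF g ∧ 0 < g.1) :
    ∃ f : QF D, ∀ k : QF D, QFEquiv f.1 k.1 → ∃ i : Option (ZMod p), NonVan p k.1 i ∧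
      QFEquiv (qfDiag p (qfAt k.1 i)) g := by
  obtain ⟨f, hf, hf1, hfg⟩ := qf_descend hD p hpf.out hodd g hg
  refine ⟨⟨f, hf⟩, fun k hk => ?_⟩
  obtain ⟨α, β, γ, δ, hd, h⟩ := (qfEquiv_iff _ _).1 hk
  simp only at h
  obtain ⟨i, t, ht⟩ := p_exists (p := p) α γ
  have hdi := p_det i
  have e : f = qfSub (qfAt k.1 i) (pδ i * α - pβ i * γ) (pδ i * β - pβ i * δ)
      (p * t) (pα i * δ - pγ i * β) := by
    rw [h, qfAt, qfSub_qfSub]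
    congr 1
    · linear_combination (-α) * hdi + pβ i * ht
    · linear_combination (-β) * hdi
    · linear_combination (-γ) * hdi + pδ i * ht
    · linear_combination (-δ) * hdi
  refine ⟨i, ?_, ?_⟩
  · rw [nonVan_iff]
    intro hdvd
    apply hf1
    rw [e]
    exact dvd_add (dvd_add (hdvd.mul_right _) ((((dvd_mul_right _ _).mul_left _))))
      ((dvd_pow (dvd_mul_right _ _) two_ne_zero).mul_left _)
  · have := qf_equiv_lift p (qfAt k.1 i) (pδ i * α - pβ i * γ) (pδ i * β - pβ i * δ) t
      (pα i * δ - pγ i * β) (by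
        rw [← ht]
        linear_combination (α * δ - β * γ) * hdi + hd)
    rw [← e] at this
    exact qfEquiv_trans (qfEquiv_symm this) hfg

theorem stmt5 (D : ℤ) (hD4 : D < -4) (hDmod : D % 4 = 0 ∨ D % 4 = 1)
    (p : ℕ) (hp : p.Prime) (hodd : Odd p) :
    (classNumber (D * (p : ℤ) ^ 2) : ℤ)
      = (classNumber D : ℤ) * ((p : ℤ) - @legendreSym p ⟨hp⟩ D) := by
  
  haveI : Fact p.Prime := ⟨hp⟩
  have hD0 : D < 0 := by linarith
  have hmem : ∀ (f : QF D) (i : Option (ZMod p)), NonVan p f.1 i →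
      qfDisc (qfDiag p (qfAt f.1 i)) = D * (p : ℤ) ^ 2 ∧
        IsPrimitiveQF (qfDiag p (qfAt f.1 i)) ∧ 0 < (qfDiag p (qfAt f.1 i)).1 := by
    intro f i hi
    have hm := qf_mem hD0 f.1 f.2 _ _ _ _ (p_det i)
    refine ⟨?_, ?_, hm.2.2⟩
    · rw [disc_qfDiag, qfAt, hm.1]
    · exact prim_qfDiag p hp _ hm.2.1 ((nonVan_iff p f.1 i).1 hi)
  let n : ℕ := ((p : ℤ) - legendreSym p D).toNat
  have hcard : ∀ f : QF D, (Nat.card {i : Option (ZMod p) // NonVan p f.1 i} : ℤ) =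
      (p : ℤ) - legendreSym p D := by
    intro f
    rw [card_nonVan p hodd f.1 f.2.2.1, f.2.1]
  have hout : ∀ q : QFCl D, (Quot.mk _ q.out : QFCl D) = q := fun q => Quot.out_eq q
  let Φ : (Σ q : QFCl D, {i : Option (ZMod p) // NonVan p q.out.1 i}) →
      QFCl (D * (p : ℤ) ^ 2) :=
    fun x => Quot.mk _ ⟨qfDiag p (qfAt x.1.out.1 x.2.1), hmem _ _ x.2.2⟩
  have hΦ : Function.Bijective Φ := by
    constructor
    · rintro ⟨q, i, hi⟩ ⟨q', i', hi'⟩ h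
      have h' := (qfCl_eq _ _).1 h
      obtain ⟨h1, h2⟩ := qf_inj hD4 p hodd q.out q'.out i i' hi hi' h'
      have hq : q = q' := by
        rw [← hout q, ← hout q']
        exact (qfCl_eq _ _).2 h1
      subst hq
      have := h2 rfl
      subst this
      rfl
    · intro y
      obtain ⟨⟨g, hg⟩, rfl⟩ := Quot.exists_rep y
      obtain ⟨f, hf⟩ := qf_surj hD0 p hodd g hg
      obtain ⟨i, hi, hi'⟩ := hf (Quot.mk _ f : QFCl D).out
        ((qfCl_eq _ _).1 (hout (Quot.mk _ f)).symm)
      exact ⟨⟨Quot.mk _ f, i, hi⟩, (qfCl_eq _ _).2 hi'⟩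
  have hn : ∀ q : QFCl D, Nat.card {i : Option (ZMod p) // NonVan p q.out.1 i} = n := by
    intro q
    have := hcard q.out
    omega
  let E : (Σ q : QFCl D, {i : Option (ZMod p) // NonVan p q.out.1 i}) ≃ QFCl D × Fin n :=
    (Equiv.sigmaCongrRight fun q => (Finite.equivFin _).trans (finCongr (hn q))).trans
      (Equiv.sigmaEquivProd _ _)
  have hfin : classNumber (D * (p : ℤ) ^ 2) = classNumber D * n := by
    unfold classNumber
    rw [← Nat.card_eq_of_bijective Φ hΦ, Nat.card_congr E, Nat.card_prod, Nat.card_fin]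
  rw [hfin]
  push_cast
  by_cases he : Nonempty (QFCl D)
  · obtain ⟨q⟩ := he
    have h1 := hcard q.out
    rw [hn q] at h1
    rw [h1]
  · have h0 : classNumber D = 0 := by
      unfold classNumber
      haveI : IsEmpty (QFCl D) := not_nonempty_iff.1 he
      exact Nat.card_of_isEmpty
    rw [h0]
    simp
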